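/- arXiv:2511.20929 — 2 statements merged into one kernel-verified Lean document; each statement's English description precedes it below -/
import Mathlib

section
/- For all real numbers b, c_min, c_max, α, M with 0 < c_min ≤ c_max ≤ b, α ≥ 1, and c_min/c_max ≤ M ≤ 1, it holds that (α² + (b/c_min)·M² + α·(−1 − M) + M − (c_max/c_min)·M²) / (α·(b/c_min)·M) ≥ 2·√(c_min/b) − (c_min + c_max)/b. -/
open Finset
open scoped Classical

noncomputable section

/-- A participatory budgeting (PB) instance. -/
structure PB (π ν : Type) where
  projs : Finset π
  voters : Finset ν
  approves : ν → Finset π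
  cost : π → ℝ
  budget : ℝ
  projs_nonempty : projs.Nonempty
  budget_pos : 0 < budget
  cost_pos : ∀ p ∈ projs, 0 < cost p
  cost_le_budget : ∀ p ∈ projs, cost p ≤ budget
  approves_subset : ∀ i ∈ voters, approves i ⊆ projs

/-- A satisfaction function assigns a positive value to each positive cost. -/
def IsSat (μ : ℝ → ℝ) : Prop := ∀ t : ℝ, 0 < t → 0 < μ t

/-- A DNS function: weakly increasing, with weakly decreasing satisfaction per unit cost. -/
def IsDNS (μ : ℝ → ℝ) : Prop :=
  IsSat μ ∧ (∀ s t : ℝ, 0 < s → s ≤ t → μ s ≤ μ t) ∧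
    (∀ s t : ℝ, 0 < s → s ≤ t → μ t / t ≤ μ s / s)

namespace PB

variable {π ν : Type}

/-- Supporters of a project. -/
def supp (I : PB π ν) (p : π) : Finset ν := I.voters.filter (fun i => p ∈ I.approves i)

/-- Total cost of a set of projects. -/
def costOf (I : PB π ν) (S : Finset π) : ℝ := ∑ p ∈ S, I.cost p

/-- A feasible outcome. -/
def feasibleSet (I : PB π ν) (S : Finset π) : Prop := S ⊆ I.projs ∧ I.costOf S ≤ I.budget

/-- Minimum project cost. -/
def cmin (I : PB π ν) : ℝ := I.projs.inf' I.projs_nonempty I.cost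

/-- Maximum project cost. -/
def cmax (I : PB π ν) : ℝ := I.projs.sup' I.projs_nonempty I.cost

/-- Utilitarian welfare of a set of projects. -/
def uw (I : PB π ν) (μ : ℝ → ℝ) (S : Finset π) : ℝ :=
  ∑ p ∈ S, ((I.supp p).card : ℝ) * μ (I.cost p)

/-- The value ("bang per buck") of a project. -/
def projVal (I : PB π ν) (μ : ℝ → ℝ) (p : π) : ℝ :=
  ((I.supp p).card : ℝ) * μ (I.cost p) / I.cost p

/-- Satisfaction of voter `i` from an outcome. -/
def satOf (I : PB π ν) (μ : ℝ → ℝ) (i : ν) (S : Finset π) : ℝ :=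
  ∑ p ∈ S ∩ I.approves i, μ (I.cost p)

/-- Minimum satisfaction of a project in the instance. -/
def muMin (I : PB π ν) (μ : ℝ → ℝ) : ℝ :=
  I.projs.inf' I.projs_nonempty (fun p => μ (I.cost p))

/-- Maximum satisfaction of a project in the instance. -/
def muMax (I : PB π ν) (μ : ℝ → ℝ) : ℝ :=
  I.projs.sup' I.projs_nonempty (fun p => μ (I.cost p))

/-- The maximal utilitarian welfare over feasible outcomes. -/
def maxUW (I : PB π ν) (μ : ℝ → ℝ) : ℝ :=
  (I.projs.powerset.filter (fun S => I.costOf S ≤ I.budget)).sup'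
    ⟨∅, Finset.mem_filter.mpr ⟨Finset.empty_mem_powerset _,
      by simpa [PB.costOf] using I.budget_pos.le⟩⟩
    (I.uw μ)

/-- A group `N'` is `T`-cohesive. -/
def cohesive (I : PB π ν) (N' : Finset ν) (T : Finset π) : Prop :=
  N' ⊆ I.voters ∧ T ⊆ I.projs ∧ (∀ i ∈ N', T ⊆ I.approves i) ∧
    I.costOf T ≤ ((N'.card : ℝ) / (I.voters.card : ℝ)) * I.budget

/-- Extended justified representation up to one project w.r.t. `μ`. -/
def EJR1 (I : PB π ν) (μ : ℝ → ℝ) (W : Finset π) : Prop :=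
  ∀ N' T, I.cohesive N' T →
    T ⊆ W ∨ ∃ i ∈ N', ∃ p ∈ I.approves i, p ∉ W ∧
      I.satOf μ i W + μ (I.cost p) > I.satOf μ i T

/-- Pick the element of maximal `f`-value, breaking ties by the linear order. -/
def pickMax [LinearOrder π] (f : π → ℝ) (S : Finset π) (h : S.Nonempty) : π :=
  (S.filter (fun p => ∀ q ∈ S, f q ≤ f p)).min' (by
    obtain ⟨p, hp, hm⟩ := S.exists_max_image f h
    exact ⟨p, Finset.mem_filter.mpr ⟨hp, hm⟩⟩)

/-- Pick the element of minimal `f`-value, breaking ties by the linear order. -/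
def pickMin [LinearOrder π] (f : π → ℝ) (S : Finset π) (h : S.Nonempty) : π :=
  (S.filter (fun p => ∀ q ∈ S, f p ≤ f q)).min' (by
    obtain ⟨p, hp, hm⟩ := S.exists_min_image f h
    exact ⟨p, Finset.mem_filter.mpr ⟨hp, hm⟩⟩)

section Greedy

variable [LinearOrder π]

/-- One choice of the greedy rule: among the unchosen affordable projects, the one of
maximum value (ties broken by the linear order); `none` if no project is affordable. -/
def greedyStep (I : PB π ν) (μ : ℝ → ℝ) (rem : Finset π) (budg : ℝ) : Option π :=
  if h : (rem.filter (fun p => I.cost p ≤ budg)).Nonempty then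
    some (pickMax (I.projVal μ) (rem.filter (fun p => I.cost p ≤ budg)) h)
  else none

/-- The (ordered) list of projects chosen by the greedy rule, with fuel. -/
def greedyAux (I : PB π ν) (μ : ℝ → ℝ) : ℕ → Finset π → ℝ → List π
  | 0, _, _ => []
  | (k+1), rem, budg =>
    match I.greedyStep μ rem budg with
    | none => []
    | some p => p :: greedyAux I μ k (rem.erase p) (budg - I.cost p)

/-- The projects chosen by `Greedy_μ`, in order of selection. -/
def greedySeq (I : PB π ν) (μ : ℝ → ℝ) : List π :=
  greedyAux I μ I.projs.card I.projs I.budget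

/-- The outcome of the greedy rule started from a set `rem` of unchosen projects
with remaining budget `budg`. -/
def greedyFrom (I : PB π ν) (μ : ℝ → ℝ) (rem : Finset π) (budg : ℝ) : Finset π :=
  (greedyAux I μ rem.card rem budg).toFinset

/-- The outcome of `Greedy_μ`. -/
def greedy (I : PB π ν) (μ : ℝ → ℝ) : Finset π := (I.greedySeq μ).toFinset

/-- The state (unchosen projects, remaining budget) of `Greedy_μ` after `k` stages. -/
def greedyStateAux (I : PB π ν) (μ : ℝ → ℝ) : ℕ → Finset π × ℝ
  | 0 => (I.projs, I.budget)
  | (k+1) =>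
    match I.greedyStep μ (greedyStateAux I μ k).1 (greedyStateAux I μ k).2 with
    | none => greedyStateAux I μ k
    | some p => ((greedyStateAux I μ k).1.erase p, (greedyStateAux I μ k).2 - I.cost p)

/-- The project chosen by `Greedy_μ` at stage `k+1` (i.e. after `k` stages), if any. -/
def greedyChoice (I : PB π ν) (μ : ℝ → ℝ) (k : ℕ) : Option π :=
  I.greedyStep μ (I.greedyStateAux μ k).1 (I.greedyStateAux μ k).2

end Greedy

section MES

variable [LinearOrder π]

/-- The set of values `ρ ≥ 0` at which project `p` can be bought given voter budgets `bud`. -/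
def rhoSet (I : PB π ν) (μ : ℝ → ℝ) (bud : ν → ℝ) (p : π) : Set ℝ :=
  {ρ : ℝ | 0 ≤ ρ ∧ ∑ i ∈ I.supp p, min (bud i) (ρ * μ (I.cost p)) = I.cost p}

/-- `ρ(p)`: the least `ρ ≥ 0` at which `p` can be bought (junk value if none exists). -/
def rho (I : PB π ν) (μ : ℝ → ℝ) (bud : ν → ℝ) (p : π) : ℝ := sInf (I.rhoSet μ bud p)

/-- One choice of MES: among the unchosen projects with `ρ(p) < ∞`, one minimizing `ρ(p)`
(ties broken by the linear order); `none` if no project can be bought. -/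
def mesStep (I : PB π ν) (μ : ℝ → ℝ) (rem : Finset π) (bud : ν → ℝ) : Option π :=
  if h : (rem.filter (fun p => (I.rhoSet μ bud p).Nonempty)).Nonempty then
    some (pickMin (I.rho μ bud) (rem.filter (fun p => (I.rhoSet μ bud p).Nonempty)) h)
  else none

/-- Voter budgets after the supporters of `p` pay for it. -/
def mesPay (I : PB π ν) (μ : ℝ → ℝ) (bud : ν → ℝ) (p : π) : ν → ℝ :=
  fun i => if i ∈ I.supp p then bud i - min (bud i) (I.rho μ bud p * μ (I.cost p)) else bud i

/-- The state (unchosen projects, voter budgets) of `MES_μ` after `k` stages. -/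
def mesStateAux (I : PB π ν) (μ : ℝ → ℝ) : ℕ → Finset π × (ν → ℝ)
  | 0 => (I.projs, fun _ => I.budget / (I.voters.card : ℝ))
  | (k+1) =>
    match I.mesStep μ (mesStateAux I μ k).1 (mesStateAux I μ k).2 with
    | none => mesStateAux I μ k
    | some p => ((mesStateAux I μ k).1.erase p, I.mesPay μ (mesStateAux I μ k).2 p)

/-- The project chosen by `MES_μ` at stage `k+1` (i.e. after `k` stages), if any. -/
def mesChoice (I : PB π ν) (μ : ℝ → ℝ) (k : ℕ) : Option π :=
  I.mesStep μ (I.mesStateAux μ k).1 (I.mesStateAux μ k).2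

/-- The final state of `MES_μ`. -/
def mesFinal (I : PB π ν) (μ : ℝ → ℝ) : Finset π × (ν → ℝ) :=
  I.mesStateAux μ I.projs.card

/-- The outcome of `MES_μ`. -/
def mesOutcome (I : PB π ν) (μ : ℝ → ℝ) : Finset π := I.projs \ (I.mesFinal μ).1

/-- The outcome of `MES_μ` completed by `Greedy_μ`: run MES, then greedy on the unchosen
projects with the remaining total budget. -/
def completedMES (I : PB π ν) (μ : ℝ → ℝ) : Finset π :=
  I.mesOutcome μ ∪
    I.greedyFrom μ (I.mesFinal μ).1 (I.budget - I.costOf (I.mesOutcome μ))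

/-- Voter `i` is budget-limited for project `p` after `k` stages of `MES_μ`:
`p` is unchosen and approved by `i`, affordable from the total remaining budget,
but an equal split of its cost exceeds `i`'s personal budget. -/
def budgetLimitedAt (I : PB π ν) (μ : ℝ → ℝ) (k : ℕ) (i : ν) (p : π) : Prop :=
  i ∈ I.voters ∧ p ∈ (I.mesStateAux μ k).1 ∧ p ∈ I.approves i ∧
    I.cost p ≤ ∑ j ∈ I.voters, (I.mesStateAux μ k).2 j ∧
    (I.mesStateAux μ k).2 i < I.cost p / ((I.supp p).card : ℝ)

end MES

/-- Total cost of a list of projects. -/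
def listCost (I : PB π ν) (L : List π) : ℝ := (L.map I.cost).sum

/-- Total utilitarian welfare of a list of projects. -/
def listUW (I : PB π ν) (μ : ℝ → ℝ) (L : List π) : ℝ :=
  (L.map (fun p => ((I.supp p).card : ℝ) * μ (I.cost p))).sum

end PB

/-- The arithmetic inequality from Case 2 of Theorem 4.1. -/
theorem case2_inequality (b cmin cmax α M : ℝ) (h1 : 0 < cmin) (h2 : cmin ≤ cmax)
    (h3 : cmax ≤ b) (hα : 1 ≤ α) (hM1 : cmin / cmax ≤ M) (hM2 : M ≤ 1) :
    (α ^ 2 + (b / cmin) * M ^ 2 + α * (-1 - M) + M - (cmax / cmin) * M ^ 2) /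
        (α * (b / cmin) * M) ≥
      2 * Real.sqrt (cmin / b) - (cmin + cmax) / b := by
  have hc : 0 < cmax := lt_of_lt_of_le h1 h2
  have hb : 0 < b := lt_of_lt_of_le hc h3
  have hM : 0 < M := lt_of_lt_of_le (div_pos h1 hc) hM1
  have hk : 0 ≤ M * (cmax / cmin) - 1 := by
    rw [div_le_iff₀ hc] at hM1
    have : 1 ≤ M * cmax / cmin := by rw [le_div_iff₀ h1]; linarith
    rw [← mul_div_assoc]; linarith
  have hs : 0 < Real.sqrt (cmin / b) := Real.sqrt_pos.mpr (div_pos h1 hb)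
  have hs2 : Real.sqrt (cmin / b) ^ 2 = cmin / b := Real.sq_sqrt (div_pos h1 hb).le
  set s := Real.sqrt (cmin / b) with hsdef
  have e1 : b / cmin = (s⁻¹) ^ 2 := by rw [inv_pow, hs2, inv_div]
  have e2 : (cmin + cmax) / b = s ^ 2 * (1 + cmax / cmin) := by
    rw [hs2]; field_simp
  rw [e1, e2, ge_iff_le, le_div_iff₀ (by positivity)]
  generalize cmax / cmin = k at *
  have e3 : (2 * s - s ^ 2 * (1 + k)) * (α * s⁻¹ ^ 2 * M)
      = 2 * α * M * s⁻¹ - α * M * (1 + k) := by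
    field_simp
  rw [e3]
  nlinarith [sq_nonneg (α - M * s⁻¹), mul_nonneg (show 0 ≤ α - M by linarith) hk]
end
end

section
/- Let I be a PB instance with budget b and let μ be any satisfaction function. Let P₁, P₂ ⊆ P with c(P₂) ≤ b, and suppose v* ≥ 0 is a real number such that v_μ(p) ≥ v* for every p ∈ P₁ \ P₂ and v_μ(p) ≤ v* for every p ∈ P₂ \ P₁. Then uw_μ(P₂) ≤ uw_μ(P₁) + v*·(b − c(P₁)). -/
open Finset
open scoped Classical

noncomputable section

/-- The knapsack-style exchange bound underlying the Greedy guarantee. -/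
theorem exchange_bound {π ν : Type} (I : PB π ν) (μ : ℝ → ℝ) (hμ : IsSat μ)
    (P₁ P₂ : Finset π) (h1 : P₁ ⊆ I.projs) (h2 : P₂ ⊆ I.projs)
    (hc : I.costOf P₂ ≤ I.budget) (v : ℝ) (hv : 0 ≤ v)
    (hlo : ∀ p ∈ P₁ \ P₂, v ≤ I.projVal μ p)
    (hhi : ∀ p ∈ P₂ \ P₁, I.projVal μ p ≤ v) :
    I.uw μ P₂ ≤ I.uw μ P₁ + v * (I.budget - I.costOf P₁) := by
  have key : ∑ p ∈ P₂, (((I.supp p).card : ℝ) * μ (I.cost p) - v * I.cost p)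
      ≤ ∑ p ∈ P₁, (((I.supp p).card : ℝ) * μ (I.cost p) - v * I.cost p) := by
    rw [← Finset.sum_inter_add_sum_sdiff P₂ P₁, ← Finset.sum_inter_add_sum_sdiff P₁ P₂,
      Finset.inter_comm P₂ P₁]
    have ha : ∑ p ∈ P₂ \ P₁, (((I.supp p).card : ℝ) * μ (I.cost p) - v * I.cost p) ≤ 0 := by
      apply Finset.sum_nonpos
      intro p hp
      have h := hhi p hp
      have hpos := I.cost_pos p (h2 (Finset.mem_sdiff.mp hp).1)
      rw [PB.projVal, div_le_iff₀ hpos] at h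
      linarith
    have hb : 0 ≤ ∑ p ∈ P₁ \ P₂, (((I.supp p).card : ℝ) * μ (I.cost p) - v * I.cost p) := by
      apply Finset.sum_nonneg
      intro p hp
      have h := hlo p hp
      have hpos := I.cost_pos p (h1 (Finset.mem_sdiff.mp hp).1)
      rw [PB.projVal, le_div_iff₀ hpos] at h
      linarith
    linarith
  rw [Finset.sum_sub_distrib, Finset.sum_sub_distrib, ← Finset.mul_sum, ← Finset.mul_sum] at key
  have hm := mul_le_mul_of_nonneg_left hc hv
  unfold PB.uw
  unfold PB.costOf at hm ⊢
  linarith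
end
end
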